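/- Let n ≥ 1, c ∈ ℝ^n, and k ∈ L^1_c(ℝ^n_+). Then the equation ∫_{ℝ^n_+} k(p_1x_1,…,p_nx_n) f(x) dx = 0 for all p ∈ ℝ^n_+ has only the trivial solution f = 0 (a.e.) in L^∞_{I−c}(ℝ^n_+) if and only if (Mk)(c + iξ) ≠ 0 for every ξ ∈ ℝ^n. -/

import Mathlib

open MeasureTheory Complex Set

noncomputable section

/-- The positive orthant `ℝ^n_+`. -/
def posOrth (n : ℕ) : Set (Fin n → ℝ) := {x | ∀ i, 0 < x i}

/-- The `n`-dimensional Mellin transform `(Mg)(z) = ∫_{ℝ^n_+} x^{z-I} g(x) dx`. -/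
def mellinT (n : ℕ) (g : (Fin n → ℝ) → ℝ) (z : Fin n → ℂ) : ℂ :=
  ∫ x in posOrth n, (∏ i, (x i : ℂ) ^ (z i - 1)) * g x

/-- Membership in `L¹_c(ℝ^n_+)`: measurable with `∫ |f| x^{c-I} < ∞`. -/
def MemL1w (n : ℕ) (c : Fin n → ℝ) (f : (Fin n → ℝ) → ℝ) : Prop :=
  IntegrableOn (fun x => f x * ∏ i, x i ^ (c i - 1)) (posOrth n)

/-- Membership in `L^∞_c(ℝ^n_+)`: measurable with `ess sup |f(x) x^c| < ∞`. -/
def MemLinfw (n : ℕ) (c : Fin n → ℝ) (f : (Fin n → ℝ) → ℝ) : Prop :=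
  AEStronglyMeasurable f (volume.restrict (posOrth n)) ∧
  ∃ K : ℝ, ∀ᵐ x ∂(volume.restrict (posOrth n)), |f x * ∏ i, x i ^ c i| ≤ K


open Filter Topology FourierTransform Convolution ContDiff

set_option linter.unusedSectionVars false

section Wiener

variable {E : Type*} [NormedAddCommGroup E] [InnerProductSpace ℝ E] [FiniteDimensional ℝ E]
  [MeasurableSpace E] [BorelSpace E]

def cv (f g : E → ℂ) (x : E) : ℂ := ∫ y, f y * g (x - y)

lemma cv_eq (f g : E → ℂ) : cv f g = f ⋆[ContinuousLinearMap.mul ℂ ℂ] g := rfl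

lemma cv_comm (f g : E → ℂ) : cv f g = cv g f := by
  ext x
  unfold cv
  rw [← integral_sub_left_eq_self _ volume x]
  simp [mul_comm]

lemma cv_integrable {f g : E → ℂ} (hf : Integrable f) (hg : Integrable g) :
    Integrable (cv f g) := by
  rw [cv_eq]; exact hf.integrable_convolution _ hg

lemma cv_norm_le {f φ : E → ℂ} {C : ℝ} (hf : Integrable f) (hφ : ∀ x, ‖φ x‖ ≤ C) (x : E) :
    ‖cv f φ x‖ ≤ (∫ y, ‖f y‖) * C := by
  unfold cv
  rw [← integral_mul_const]
  apply norm_integral_le_of_norm_le (hf.norm.mul_const C)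
  filter_upwards with y
  rw [norm_mul]
  gcongr
  exact hφ _

lemma cv_exists {f φ : E → ℂ} {C : ℝ} (hf : Integrable f) (hm : Measurable φ)
    (hφ : ∀ x, ‖φ x‖ ≤ C) (x : E) : Integrable (fun y => f y * φ (x - y)) := by
  apply hf.mul_bdd (c := C)
  · exact (hm.comp (by fun_prop)).aestronglyMeasurable
  · exact Eventually.of_forall fun y => hφ _

lemma cv_assoc {f g φ : E → ℂ} {C : ℝ} (hf : Integrable f) (hg : Integrable g) (hm : Measurable φ)
    (hφ : ∀ x, ‖φ x‖ ≤ C) (x : E) : cv (cv f g) φ x = cv f (cv g φ) x := by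
  simp only [cv_eq]
  have key : ∀ x, ConvolutionExistsAt (fun x => ‖g x‖) (fun x => ‖φ x‖) x
      (ContinuousLinearMap.mul ℝ ℝ) volume := by
    intro x
    have := (cv_exists hg hm hφ x).norm
    simpa [ConvolutionExistsAt] using this
  apply convolution_assoc
  · intro a b c
    simp [mul_assoc]
  · exact hf.1
  · exact hg.1
  · exact hm.aestronglyMeasurable
  · exact hf.ae_convolution_exists _ hg
  · exact Eventually.of_forall key
  · unfold ConvolutionExistsAt
    have hm2 : AEStronglyMeasurable ((fun x => ‖g x‖) ⋆[ContinuousLinearMap.mul ℝ ℝ, volume]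
        fun x => ‖φ x‖) volume := by
      have : (fun p : E × E => ‖g p.2‖ * ‖φ (p.1 - p.2)‖) = fun p : E × E => ‖g p.2‖ * ‖φ (p.1 - p.2)‖ := rfl
      have h3 : AEStronglyMeasurable (fun p : E × E => ‖g p.2‖ * ‖φ (p.1 - p.2)‖)
          (volume.prod volume) := by
        apply AEStronglyMeasurable.mul
        · exact hg.1.norm.comp_snd
        · exact (hm.norm.comp (by fun_prop)).aestronglyMeasurable
      exact h3.integral_prod_right'
    simp only [ContinuousLinearMap.mul_apply']
    apply hf.norm.mul_bdd (c := (∫ y, ‖g y‖) * C)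
    · apply hm2.comp_quasiMeasurePreserving
      exact quasiMeasurePreserving_sub_left_of_right_invariant volume x
    · refine Eventually.of_forall fun y => ?_
      unfold convolution
      rw [← integral_mul_const]
      apply norm_integral_le_of_norm_le (hg.norm.mul_const C)
      filter_upwards with z
      simp only [ContinuousLinearMap.mul_apply', norm_mul, norm_norm]
      gcongr
      exact hφ _

lemma trans_cont {g : E → ℂ} (hg : Integrable g) :
    Continuous (fun z : E => ∫ x, ‖g (x - z) - g x‖) := by
  let T : E → C(E, E) := fun z => ⟨fun x => x - z, by fun_prop⟩
  have hT : Continuous T := by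
    refine ContinuousMap.continuous_of_continuous_uncurry _ ?_
    change Continuous fun p : E × E => p.2 - p.1
    fun_prop
  have hmp : ∀ z, MeasurePreserving (T z) volume volume := fun z =>
    measurePreserving_sub_right volume z
  have hmem : MemLp g 1 volume := memLp_one_iff_integrable.2 hg
  have h1 := (continuous_const (y := hmem.toLp g)).compMeasurePreservingLp hT hmp (by simp)
  have h2 := (h1.sub (continuous_const (y := hmem.toLp g))).norm
  convert h2 using 2 with z
  simp only [Pi.sub_apply]
  rw [Lp.toLp_compMeasurePreserving, ← MemLp.toLp_sub, L1.norm_eq_integral_norm]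
  apply integral_congr_ae
  filter_upwards [((hmem.comp_measurePreserving (hmp z)).sub hmem).coeFn_toLp] with x hx
  rw [hx]
  rfl

lemma approx_id {κ g : E → ℂ} (hκ : Integrable κ) (hg : Integrable g) (hgc : Continuous g) :
    Tendsto (fun ε : ℝ => ∫ x, ‖(∫ y, κ y * g (x - ε • y)) - (∫ y, κ y) * g x‖) (𝓝 0) (𝓝 0) := by
  set om : E → ℝ := fun z : E => ∫ x, ‖g (x - z) - g x‖ with hom
  have homc : Continuous om := trans_cont hg
  have hom0 : om 0 = 0 := by simp [hom]
  have homnn : ∀ z, 0 ≤ om z := fun z => integral_nonneg fun _ => norm_nonneg _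
  have hsl : ∀ z, Integrable (fun x => g (x - z)) := fun z => hg.comp_sub_right z
  have homb : ∀ z, ‖om z‖ ≤ 2 * ∫ x, ‖g x‖ := by
    intro z
    rw [Real.norm_of_nonneg (homnn z)]
    calc om z ≤ ∫ x, (‖g (x - z)‖ + ‖g x‖) := by
          apply integral_mono ((hsl z).sub hg).norm ((hsl z).norm.add hg.norm)
          intro x; exact norm_sub_le _ _
      _ = 2 * ∫ x, ‖g x‖ := by
          rw [integral_add (hsl z).norm hg.norm, integral_sub_right_eq_self (fun x => ‖g x‖) z]; ring
  have hint : ∀ ε : ℝ, Integrable (fun y => ‖κ y‖ * om (ε • y)) := by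
    intro ε
    apply hκ.norm.mul_bdd
    · exact (homc.comp (by fun_prop)).aestronglyMeasurable
    · exact Eventually.of_forall fun y => homb _
  have hprod : ∀ ε : ℝ, Integrable (fun p : E × E => κ p.2 * (g (p.1 - ε • p.2) - g p.1))
      (volume.prod volume) := by
    intro ε
    rw [integrable_prod_iff']
    · constructor
      · refine Eventually.of_forall fun y => ?_
        exact ((hsl (ε • y)).sub hg).const_mul (κ y)
      · simp only [norm_mul, integral_const_mul]
        exact hint ε
    · apply AEStronglyMeasurable.mul
      · exact hκ.1.comp_snd
      · apply Continuous.aestronglyMeasurable; fun_prop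
  have hle : ∀ ε : ℝ, ∫ x, ‖(∫ y, κ y * g (x - ε • y)) - (∫ y, κ y) * g x‖ ≤
      ∫ y, ‖κ y‖ * om (ε • y) := by
    intro ε
    have h1 : ∫ y, ‖κ y‖ * om (ε • y) = ∫ x, ∫ y, ‖κ y * (g (x - ε • y) - g x)‖ := by
      rw [integral_integral_swap (f := fun x y => ‖κ y * (g (x - ε • y) - g x)‖) (hprod ε).norm]
      simp only [norm_mul, integral_const_mul, hom]
    rw [h1]
    apply integral_mono_of_nonneg (Eventually.of_forall fun _ => norm_nonneg _)
      (hprod ε).norm.integral_prod_left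
    filter_upwards [(hprod ε).prod_right_ae] with x hx
    have h2 : (∫ y, κ y * g (x - ε • y)) - (∫ y, κ y) * g x = ∫ y, κ y * (g (x - ε • y) - g x) := by
      have h3 := hκ.mul_const (g x)
      have h4 : Integrable fun y => κ y * g (x - ε • y) := by
        refine (hx.add h3).congr (Eventually.of_forall fun y => ?_)
        simp; ring
      rw [← integral_mul_const, ← integral_sub h4 h3]
      simp only [mul_sub]
    rw [h2]
    exact norm_integral_le_integral_norm _
  have hlim : Tendsto (fun ε : ℝ => ∫ y, ‖κ y‖ * om (ε • y)) (𝓝 0) (𝓝 0) := by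
    have h0 : (∫ y, ‖κ y‖ * om ((0:ℝ) • y)) = 0 := by simp [hom0]
    conv => arg 3; rw [← h0]
    apply tendsto_integral_filter_of_dominated_convergence (fun y => ‖κ y‖ * (2 * ∫ x, ‖g x‖))
    · exact Eventually.of_forall fun ε => (hint ε).1
    · refine Eventually.of_forall fun ε => Eventually.of_forall fun y => ?_
      rw [norm_mul, norm_norm]
      gcongr
      exact homb _
    · exact hκ.norm.mul_const _
    · refine Eventually.of_forall fun y => ?_
      apply Tendsto.const_mul
      exact ((homc.comp (by fun_prop : Continuous fun ε : ℝ => ε • y)).tendsto 0)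
  exact squeeze_zero (fun ε => integral_nonneg fun _ => norm_nonneg _) hle hlim


lemma smooth_inv {ψ : E → ℂ} (hc : HasCompactSupport ψ) (hs : ContDiff ℝ ∞ ψ) :
    Continuous (𝓕⁻ ψ) ∧ Integrable (𝓕⁻ ψ) ∧ 𝓕 (𝓕⁻ ψ) = ψ := by
  let S : SchwartzMap E ℂ := hc.toSchwartzMap hs
  have hS : (S : E → ℂ) = ψ := rfl
  have h1 : ((𝓕⁻ S : SchwartzMap E ℂ) : E → ℂ) = 𝓕⁻ ψ := by
    rw [SchwartzMap.fourierInv_coe, hS]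
  refine ⟨?_, ?_, ?_⟩
  · rw [← h1]; exact (𝓕⁻ S).continuous
  · rw [← h1]; exact (𝓕⁻ S).integrable
  · rw [← h1, ← SchwartzMap.fourier_coe, FourierTransform.fourier_fourierInv_eq, hS]

lemma scale_inv (ψ : E → ℂ) {l : ℝ} (hl : 0 < l) (x : E) :
    𝓕⁻ (fun ξ => ψ (l⁻¹ • ξ)) x = (l ^ Module.finrank ℝ E : ℝ) * 𝓕⁻ ψ (l • x) := by
  rw [Real.fourierInv_eq, Real.fourierInv_eq]
  have h := Measure.integral_comp_smul (volume : Measure E)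
    (fun v => Real.fourierChar (inner ℝ v (l • x)) • ψ v) l⁻¹
  have h2 : ∀ v : E, inner ℝ (l⁻¹ • v) (l • x) = inner ℝ v x := by
    intro v
    rw [real_inner_smul_left, real_inner_smul_right, ← mul_assoc, inv_mul_cancel₀ hl.ne', one_mul]
  simp only [h2] at h
  rw [h]
  rw [inv_pow, inv_inv, abs_of_pos (by positivity), Complex.real_smul]

def bmp (E : Type*) [NormedAddCommGroup E] [InnerProductSpace ℝ E] [FiniteDimensional ℝ E] :
    ContDiffBump (0 : E) := ⟨1, 2, by norm_num, by norm_num⟩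

def psi (l : ℝ) (ξ : E) : ℂ := ((bmp E (l⁻¹ • ξ) : ℝ) : ℂ)

lemma psi_smooth (l : ℝ) : ContDiff ℝ ∞ (psi (E := E) l) := by
  unfold psi
  apply Complex.ofRealCLM.contDiff.comp
  exact (bmp E).contDiff.comp (by fun_prop)

lemma psi_compact {l : ℝ} (hl : 0 < l) : HasCompactSupport (psi (E := E) l) := by
  unfold psi
  have h1 : HasCompactSupport fun x : E => ((bmp E x : ℝ) : ℂ) :=
    (bmp E).hasCompactSupport.comp_left (g := fun x : ℝ => (x : ℂ)) (by simp)
  exact h1.comp_homeomorph (Homeomorph.smulOfNeZero l⁻¹ (inv_ne_zero hl.ne'))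

lemma psi_one {l : ℝ} (hl : 0 < l) {ξ : E} (h : ‖ξ‖ ≤ l) : psi l ξ = 1 := by
  unfold psi
  rw [(bmp E).one_of_mem_closedBall]
  · simp
  · simp only [mem_closedBall_zero_iff, norm_smul, bmp, norm_inv, Real.norm_of_nonneg hl.le]
    rw [inv_mul_le_iff₀ hl]; simpa

def Wf (l : ℝ) : E → ℂ := 𝓕⁻ (psi (E := E) l)

lemma Wf_cont {l : ℝ} (hl : 0 < l) : Continuous (Wf (E := E) l) :=
  (smooth_inv (psi_compact hl) (psi_smooth l)).1
lemma Wf_int {l : ℝ} (hl : 0 < l) : Integrable (Wf (E := E) l) :=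
  (smooth_inv (psi_compact hl) (psi_smooth l)).2.1
lemma Wf_four {l : ℝ} (hl : 0 < l) : 𝓕 (Wf (E := E) l) = psi l :=
  (smooth_inv (psi_compact hl) (psi_smooth l)).2.2
lemma Wf_scale {l : ℝ} (hl : 0 < l) (x : E) :
    Wf l x = (l ^ Module.finrank ℝ E : ℝ) * Wf 1 (l • x) := by
  have h : psi (E := E) l = fun ξ => psi 1 (l⁻¹ • ξ) := by
    ext ξ; simp [psi]
  rw [Wf, h]
  exact scale_inv _ hl x

lemma scale_int (f : E → ℂ) {l : ℝ} (hl : 0 < l) :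
    ∫ x, (l ^ Module.finrank ℝ E : ℝ) * f (l • x) = ∫ x, f x := by
  rw [integral_const_mul, Measure.integral_comp_smul, abs_of_pos (by positivity), Complex.real_smul,
    ← mul_assoc, ← Complex.ofReal_mul, mul_inv_cancel₀ (by positivity)]
  simp

lemma scale_intR (f : E → ℝ) {l : ℝ} (hl : 0 < l) :
    ∫ x, (l ^ Module.finrank ℝ E : ℝ) * f (l • x) = ∫ x, f x := by
  rw [integral_const_mul, Measure.integral_comp_smul, abs_of_pos (by positivity), smul_eq_mul,
    ← mul_assoc, mul_inv_cancel₀ (by positivity)]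
  simp

lemma cv_Wf {h : E → ℂ} (hc : Continuous h) (hi : Integrable h) (hfi : Integrable (𝓕 h))
    {C : ℝ} (hb : ∀ x, ‖h x‖ ≤ C)
    {l : ℝ} (hl : 0 < l) (hsupp : ∀ ξ, l ≤ ‖ξ‖ → 𝓕 h ξ = 0) : cv (Wf l) h = h := by
  have h1 : 𝓕 (cv (Wf l) h) = 𝓕 h := by
    ext ξ
    rw [cv_eq, Real.fourier_mul_convolution_eq (Wf_int hl) hi, Wf_four hl]
    rcases le_or_gt l ‖ξ‖ with h | h
    · simp [hsupp ξ h]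
    · rw [psi_one hl h.le, one_mul]
  have h2 : Continuous (cv (Wf l) h) := by
    rw [cv_eq]
    apply BddAbove.continuous_convolution_right_of_integrable _ _ (Wf_int hl) hc
    exact ⟨C, by rintro _ ⟨x, rfl⟩; exact hb x⟩
  rw [← h2.fourierInv_fourier_eq (cv_integrable (Wf_int hl) hi) (h1 ▸ hfi), h1,
    hc.fourierInv_fourier_eq hi hfi]

lemma local_zero {κ φ : E → ℂ} {C : ℝ} (hκ : Integrable κ) (hm : Measurable φ)
    (hφ : ∀ x, ‖φ x‖ ≤ C) (h0 : ∀ x, cv κ φ x = 0) (hne : ∫ y, κ y ≠ 0) :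
    ∃ δ > 0, ∀ h : E → ℂ, Continuous h → Integrable h → Integrable (𝓕 h) →
      (∀ ξ, δ ≤ ‖ξ‖ → 𝓕 h ξ = 0) → ∀ x, cv h φ x = 0 := by
  set c := ∫ y, κ y with hcdef
  have hA := approx_id hκ (Wf_int (E := E) one_pos) (Wf_cont one_pos)
  have hev := (hA.mono_left (nhdsWithin_le_nhds (s := Ioi 0))).eventually_lt_const
    (norm_pos_iff.2 hne)
  obtain ⟨ε, hlt, hε⟩ := (hev.and self_mem_nhdsWithin).exists
  have hε : 0 < ε := hε
  refine ⟨ε, hε, fun h hc hi hfi hsupp => ?_⟩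
  have hb : ∀ x, ‖h x‖ ≤ ∫ ξ, ‖𝓕 h ξ‖ := by
    intro x
    rw [← hc.fourierInv_fourier_eq hi hfi, Real.fourierInv_eq]
    refine (norm_integral_le_integral_norm _).trans_eq ?_
    simp [Circle.norm_smul, hc.fourierInv_fourier_eq hi hfi]
  have hW := cv_Wf hc hi hfi hb hε hsupp
  let r : E → ℂ := fun x => cv κ (Wf ε) x - c * Wf ε x
  have hri : Integrable r := (cv_integrable hκ (Wf_int hε)).sub ((Wf_int hε).const_mul c)
  have hrn : ∫ x, ‖r x‖ < ‖c‖ := by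
    refine lt_of_eq_of_lt ?_ hlt
    rw [← scale_intR (fun x => ‖(∫ y, κ y * Wf 1 (x - ε • y)) - (∫ y, κ y) * Wf 1 x‖) hε]
    congr 1
    ext x
    have : r x = (ε ^ Module.finrank ℝ E : ℝ) *
        ((∫ y, κ y * Wf 1 (ε • x - ε • y)) - c * Wf 1 (ε • x)) := by
      simp only [r, cv]
      rw [mul_sub, ← integral_const_mul]
      congr 1
      · congr 1
        ext y
        rw [Wf_scale hε, smul_sub]; ring
      · rw [Wf_scale hε]; ring
    rw [this, norm_mul, Complex.norm_real, Real.norm_of_nonneg (by positivity)]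
  have hrh : cv r h = fun x => cv κ h x - c * h x := by
    ext x
    have e1 : cv r h x = cv (cv κ (Wf ε)) h x - c * cv (Wf ε) h x := by
      simp only [r]
      unfold cv
      rw [← integral_const_mul, ← integral_sub]
      · congr 1; ext y; ring
      · exact cv_exists (cv_integrable hκ (Wf_int hε)) hc.measurable hb x
      · exact (cv_exists (Wf_int hε) hc.measurable hb x).const_mul c
    rw [e1, cv_assoc hκ (Wf_int hε) hc.measurable hb, hW]
  have hu : ∀ x, cv r (cv h φ) x = - c * cv h φ x := by
    intro x
    rw [← cv_assoc hri hi hm hφ, hrh]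
    have e1 : cv (fun x => cv κ h x - c * h x) φ x = cv (cv κ h) φ x - c * cv h φ x := by
      conv_lhs => unfold cv
      conv_rhs => rw [cv, cv]
      rw [← integral_const_mul, ← integral_sub]
      · congr 1; ext y; unfold cv; ring
      · exact cv_exists (cv_integrable hκ hi) hm hφ x
      · exact (cv_exists hi hm hφ x).const_mul c
    rw [e1, cv_comm κ h, cv_assoc hi hκ hm hφ]
    have : cv κ φ = 0 := funext h0
    rw [this]
    simp [cv]
  set u := cv h φ
  have hub : BddAbove (range fun x => ‖u x‖) :=
    ⟨_, by rintro _ ⟨x, rfl⟩; exact cv_norm_le hi hφ x⟩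
  set M := ⨆ x, ‖u x‖
  have hM : ∀ x, ‖u x‖ ≤ M := fun x => le_ciSup hub x
  have hM2 : ∀ x, ‖c‖ * ‖u x‖ ≤ (∫ x, ‖r x‖) * M := by
    intro x
    rw [← norm_mul, ← norm_neg, ← neg_mul, ← hu]
    exact cv_norm_le hri hM x
  have hcp : 0 < ‖c‖ := norm_pos_iff.2 hne
  have hM3 : M ≤ (∫ x, ‖r x‖) * M / ‖c‖ := by
    apply ciSup_le
    intro x
    rw [le_div_iff₀ hcp, mul_comm]
    exact hM2 x
  have hM0 : M ≤ 0 := by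
    rw [le_div_iff₀ hcp] at hM3
    nlinarith
  intro x
  exact norm_le_zero_iff.1 ((hM x).trans hM0)


def modu (ξ₀ : E) (f : E → ℂ) (y : E) : ℂ := ((Real.fourierChar (-inner ℝ y ξ₀) : Circle) : ℂ) * f y

lemma modu_cont (ξ₀ : E) : Continuous fun y : E => ((Real.fourierChar (-inner ℝ y ξ₀) : Circle) : ℂ) := by
  have := Real.continuous_fourierChar
  fun_prop

lemma modu_norm (ξ₀ : E) (f : E → ℂ) (y : E) : ‖modu ξ₀ f y‖ = ‖f y‖ := by
  rw [modu, norm_mul, Circle.norm_coe, one_mul]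

lemma modu_int (ξ₀ : E) {f : E → ℂ} (hf : Integrable f) : Integrable (modu ξ₀ f) := by
  unfold modu
  apply hf.bdd_mul (c := 1)
  · exact (modu_cont ξ₀).aestronglyMeasurable
  · exact Eventually.of_forall fun y => (Circle.norm_coe _).le

lemma modu_cv (ξ₀ : E) (f g : E → ℂ) (x : E) :
    cv (modu ξ₀ f) (modu ξ₀ g) x = ((Real.fourierChar (-inner ℝ x ξ₀) : Circle) : ℂ) * cv f g x := by
  unfold cv modu
  rw [← integral_const_mul]
  congr 1
  ext y
  have : ((Real.fourierChar (-inner ℝ x ξ₀) : Circle) : ℂ) =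
      ((Real.fourierChar (-inner ℝ y ξ₀) : Circle) : ℂ) * ((Real.fourierChar (-inner ℝ (x - y) ξ₀) : Circle) : ℂ) := by
    rw [← Circle.coe_mul, ← AddChar.map_add_eq_mul]
    congr 2
    rw [inner_sub_left]; ring
  rw [this]; ring

lemma modu_fourier (ξ₀ : E) (f : E → ℂ) (ξ : E) : 𝓕 (modu ξ₀ f) ξ = 𝓕 f (ξ + ξ₀) := by
  rw [Real.fourier_eq, Real.fourier_eq]
  congr 1
  ext y
  simp only [modu, Circle.smul_def, smul_eq_mul]
  rw [← mul_assoc, ← Circle.coe_mul, ← AddChar.map_add_eq_mul]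
  congr 3
  rw [inner_add_right]; ring

lemma local_zero' {κ φ : E → ℂ} {C : ℝ} (hκ : Integrable κ) (hm : Measurable φ)
    (hφ : ∀ x, ‖φ x‖ ≤ C) (h0 : ∀ x, cv κ φ x = 0) (ξ₀ : E) (hne : 𝓕 κ ξ₀ ≠ 0) :
    ∃ δ > 0, ∀ h : E → ℂ, Continuous h → Integrable h → Integrable (𝓕 h) →
      (∀ ξ, δ ≤ ‖ξ - ξ₀‖ → 𝓕 h ξ = 0) → ∀ x, cv h φ x = 0 := by
  obtain ⟨δ, hδ, H⟩ := local_zero (κ := modu ξ₀ κ) (φ := modu ξ₀ φ) (C := C) (modu_int ξ₀ hκ)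
    ((modu_cont ξ₀).measurable.mul hm) (fun x => by rw [modu_norm]; exact hφ x)
    (fun x => by rw [modu_cv, h0, mul_zero]) (by
      simpa [Real.fourier_eq, modu, Circle.smul_def] using hne)
  refine ⟨δ, hδ, fun h hc hi hfi hs x => ?_⟩
  have := H (modu ξ₀ h) ((modu_cont ξ₀).mul hc) (modu_int ξ₀ hi)
    (by
      have e : 𝓕 (modu ξ₀ h) = fun ξ => 𝓕 h (ξ + ξ₀) := funext (modu_fourier ξ₀ h)
      rw [e]; exact hfi.comp_add_right ξ₀)
    (fun ξ hξ => by rw [modu_fourier]; exact hs _ (by simpa using hξ)) x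
  rw [modu_cv] at this
  exact (mul_eq_zero.1 this).resolve_left (by simp)

lemma compact_zero {κ φ : E → ℂ} {C : ℝ} (hκ : Integrable κ) (hm : Measurable φ)
    (hφ : ∀ x, ‖φ x‖ ≤ C) (h0 : ∀ x, cv κ φ x = 0) (hne : ∀ ξ, 𝓕 κ ξ ≠ 0)
    {ψ : E → ℂ} (hc : HasCompactSupport ψ) (hs : ContDiff ℝ ∞ ψ) (x : E) :
    cv (𝓕⁻ ψ) φ x = 0 := by
  classical
  choose δ hδ H using fun ξ₀ => local_zero' hκ hm hφ h0 ξ₀ (hne ξ₀)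
  let b : ∀ ξ₀ : E, ContDiffBump ξ₀ := fun ξ₀ =>
    ⟨δ ξ₀ / 2, δ ξ₀, half_pos (hδ ξ₀), half_lt_self (hδ ξ₀)⟩
  obtain ⟨s, -, hs2⟩ := hc.elim_nhds_subcover (fun ξ₀ => Metric.ball ξ₀ (δ ξ₀ / 2))
    (fun ξ₀ _ => Metric.ball_mem_nhds _ (half_pos (hδ ξ₀)))
  have bs : ∀ ξ₀, ContDiff ℝ ∞ fun ξ => ((b ξ₀ ξ : ℝ) : ℂ) := fun ξ₀ =>
    Complex.ofRealCLM.contDiff.comp (b ξ₀).contDiff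
  -- smooth products
  let P : Finset E → E → ℂ := fun t ξ => ψ ξ * ∏ ξ₀ ∈ t, (1 - ((b ξ₀ ξ : ℝ) : ℂ))
  have Ps : ∀ t, ContDiff ℝ ∞ (P t) := fun t =>
    hs.mul (contDiff_prod fun ξ₀ _ => contDiff_const.sub (bs ξ₀))
  have Pc : ∀ t, HasCompactSupport (P t) := fun t => hc.mul_right
  have step : ∀ t : Finset E, cv (𝓕⁻ (P t)) φ x = cv (𝓕⁻ ψ) φ x := by
    intro t
    induction t using Finset.induction_on with
    | empty => simp [P]
    | insert a t ha ih =>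
      rw [← ih]
      let Q : E → ℂ := fun ξ => P t ξ * ((b a ξ : ℝ) : ℂ)
      have Qs : ContDiff ℝ ∞ Q := (Ps t).mul (bs a)
      have Qc : HasCompactSupport Q := (Pc t).mul_right
      obtain ⟨q1, q2, q3⟩ := smooth_inv Qc Qs
      obtain ⟨p1, p2, p3⟩ := smooth_inv (Pc t) (Ps t)
      have hQ : cv (𝓕⁻ Q) φ x = 0 := by
        apply H a _ q1 q2
        · rw [q3]; exact Qs.continuous.integrable_of_hasCompactSupport Qc
        · intro ξ hξ
          rw [q3]
          simp only [Q]
          rw [(b a).zero_of_le_dist (by rw [dist_eq_norm]; exact hξ)]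
          simp
      have hPQ : P (insert a t) = P t - Q := by
        ext ξ
        simp only [P, Q, Finset.prod_insert ha, Pi.sub_apply]
        ring
      have hPQ2 : 𝓕⁻ (P (insert a t)) = fun y => 𝓕⁻ (P t) y - 𝓕⁻ Q y := by
        ext y
        rw [hPQ, Real.fourierInv_eq, Real.fourierInv_eq, Real.fourierInv_eq, ← integral_sub]
        · simp [smul_sub]
        · simpa using (Real.fourierIntegral_convergent_iff (-y)).2
            ((Ps t).continuous.integrable_of_hasCompactSupport (Pc t))
        · simpa using (Real.fourierIntegral_convergent_iff (-y)).2
            (Qs.continuous.integrable_of_hasCompactSupport Qc)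
      rw [hPQ2]
      have : cv (fun y => 𝓕⁻ (P t) y - 𝓕⁻ Q y) φ x = cv (𝓕⁻ (P t)) φ x - cv (𝓕⁻ Q) φ x := by
        unfold cv
        rw [← integral_sub (cv_exists p2 hm hφ x) (cv_exists q2 hm hφ x)]
        simp only [sub_mul]
      rw [this, hQ, sub_zero]
  rw [← step s]
  have hz : P s = 0 := by
    ext ξ
    simp only [P, Pi.zero_apply]
    by_cases hξ : ξ ∈ tsupport ψ
    · obtain ⟨a, ha, hb⟩ := mem_iUnion₂.1 (hs2 hξ)
      rw [Finset.prod_eq_zero ha, mul_zero]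
      rw [(b a).one_of_mem_closedBall (Metric.ball_subset_closedBall hb)]
      simp
    · rw [image_eq_zero_of_notMem_tsupport hξ, zero_mul]
  rw [hz]
  have : 𝓕⁻ (0 : E → ℂ) = 0 := by
    ext y; simp [Real.fourierInv_eq]
  rw [this]
  simp [cv]

theorem wiener {κ φ : E → ℂ} {C : ℝ} (hκ : Integrable κ) (hm : Measurable φ)
    (hφ : ∀ x, ‖φ x‖ ≤ C) (h0 : ∀ x, cv κ φ x = 0) (hne : ∀ ξ, 𝓕 κ ξ ≠ 0) :
    ∀ᵐ x, φ x = 0 := by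
  have hW : ∀ l > 0, ∀ x, cv (Wf l) φ x = 0 := fun l hl x =>
    compact_zero hκ hm hφ h0 hne (psi_compact hl) (psi_smooth l) x
  have hW1 : ∫ y, Wf (E := E) 1 y = 1 := by
    have : 𝓕 (Wf (E := E) 1) 0 = 1 := by
      rw [Wf_four one_pos, psi_one one_pos (by simp)]
    simpa [Real.fourier_eq] using this
  have hg : ∀ g : E → ℂ, Continuous g → HasCompactSupport g → ∀ x, cv g φ x = 0 := by
    intro g hgc hgs x
    have hgi : Integrable g := hgc.integrable_of_hasCompactSupport hgs
    have hlim := (approx_id (Wf_int (E := E) one_pos) hgi hgc).mono_left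
      (nhdsWithin_le_nhds (s := Ioi 0))
    have hlim2 := hlim.mul_const C
    rw [zero_mul] at hlim2
    rw [← norm_le_zero_iff]
    refine ge_of_tendsto hlim2 ?_
    filter_upwards [self_mem_nhdsWithin] with ε hε
    have hε : 0 < ε := hε
    have hl : 0 < ε⁻¹ := inv_pos.2 hε
    have e1 : ∀ x, ∫ y, Wf 1 y * g (x - ε • y) = cv (Wf ε⁻¹) g x := by
      intro x
      unfold cv
      rw [← scale_int (fun y => Wf 1 y * g (x - ε • y)) hl]
      congr 1
      ext y
      rw [Wf_scale hl, smul_smul, mul_inv_cancel₀ hε.ne', one_smul]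
      ring
    simp only [e1, hW1, one_mul]
    have hi := cv_integrable (Wf_int hl) hgi
    have e2 : cv (fun x => cv (Wf ε⁻¹) g x - g x) φ x = - cv g φ x := by
      have : cv (fun x => cv (Wf ε⁻¹) g x - g x) φ x = cv (cv (Wf ε⁻¹) g) φ x - cv g φ x := by
        conv_lhs => rw [cv]
        conv_rhs => rw [cv]
        conv_rhs => arg 2; rw [cv]
        rw [← integral_sub (cv_exists hi hm hφ x) (cv_exists hgi hm hφ x)]
        simp only [sub_mul]
      rw [this, cv_comm (Wf ε⁻¹) g, cv_assoc hgi (Wf_int hl) hm hφ]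
      have : cv (Wf ε⁻¹) φ = 0 := funext (hW _ hl)
      rw [this]
      simp [cv]
    rw [← norm_neg, ← e2]
    exact cv_norm_le (hi.sub hgi) hφ x
  apply ae_eq_zero_of_integral_contDiff_smul_eq_zero
  · have : LocallyIntegrable (fun _ : E => C) := locallyIntegrable_const _
    exact this.mono hm.aestronglyMeasurable
      (Eventually.of_forall fun x => (hφ x).trans (le_abs_self _))
  · intro g hg1 hg2
    have := hg (fun x => ((g (-x) : ℝ) : ℂ)) (by have := hg1.continuous; fun_prop)
      ((hg2.comp_homeomorph (Homeomorph.neg E)).comp_left (g := fun x : ℝ => (x : ℂ)) (by simp)) 0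
    unfold cv at this
    rw [← integral_neg_eq_self] at this
    simpa using this

end Wiener

section CoV

variable {n : ℕ}

def Gx (t : Fin n → ℝ) : Fin n → ℝ := fun i => Real.exp (t i)

lemma Gx_pos (t : Fin n → ℝ) (i : Fin n) : 0 < Gx t i := Real.exp_pos _

lemma Gx_image : Gx '' (univ : Set (Fin n → ℝ)) = posOrth n := by
  ext x
  simp only [image_univ, mem_range, posOrth, mem_ofPred_eq]
  constructor
  · rintro ⟨t, rfl⟩ i; exact Gx_pos t i
  · intro h
    exact ⟨fun i => Real.log (x i), funext fun i => Real.exp_log (h i)⟩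

lemma Gx_inj : Function.Injective (Gx (n := n)) := by
  intro s t h
  ext i
  exact Real.exp_injective (congrFun h i)

def Gx' (t : Fin n → ℝ) : (Fin n → ℝ) →L[ℝ] (Fin n → ℝ) :=
  ContinuousLinearMap.pi fun i =>
    ((Real.exp (t i)) • ContinuousLinearMap.id ℝ ℝ).comp (ContinuousLinearMap.proj i)

lemma Gx_deriv (t : Fin n → ℝ) : HasFDerivAt Gx (Gx' t) t := by
  rw [hasFDerivAt_pi']
  intro i
  have h1 : HasFDerivAt (fun t : Fin n → ℝ => t i)
    (ContinuousLinearMap.proj (R := ℝ) (φ := fun _ : Fin n => ℝ) i) t :=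
    (ContinuousLinearMap.proj (R := ℝ) (φ := fun _ : Fin n => ℝ) i).hasFDerivAt
  have h2 := h1.exp
  convert! h2 using 1

lemma Gx'_det (t : Fin n → ℝ) : |(Gx' t).det| = Real.exp (∑ i, t i) := by
  unfold Gx'
  rw [ContinuousLinearMap.det_pi, Real.exp_sum]
  have : ∀ i, (Real.exp (t i) • ContinuousLinearMap.id ℝ ℝ).det = Real.exp (t i) := by
    intro i
    simp [ContinuousLinearMap.det]
  simp only [this]
  exact abs_of_pos (Finset.prod_pos fun i _ => Real.exp_pos _)

lemma cov_int {F : Type*} [NormedAddCommGroup F] [NormedSpace ℝ F] (g : (Fin n → ℝ) → F) :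
    ∫ x in posOrth n, g x = ∫ t, Real.exp (∑ i, t i) • g (Gx t) := by
  rw [← Gx_image, integral_image_eq_integral_abs_det_fderiv_smul volume MeasurableSet.univ
    (fun t _ => (Gx_deriv t).hasFDerivWithinAt) Gx_inj.injOn]
  simp [Gx'_det]

lemma cov_integrable {F : Type*} [NormedAddCommGroup F] [NormedSpace ℝ F] (g : (Fin n → ℝ) → F) :
    IntegrableOn g (posOrth n) ↔ Integrable fun t => Real.exp (∑ i, t i) • g (Gx t) := by
  rw [← Gx_image, integrableOn_image_iff_integrableOn_abs_det_fderiv_smul volume MeasurableSet.univ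
    (fun t _ => (Gx_deriv t).hasFDerivWithinAt) Gx_inj.injOn]
  simp [Gx'_det]

lemma posOrth_meas : MeasurableSet (posOrth n) := by
  have : posOrth n = ⋂ i, {x : Fin n → ℝ | 0 < x i} := by
    ext x; simp [posOrth]
  rw [this]
  exact MeasurableSet.iInter fun i => measurableSet_lt measurable_const (measurable_pi_apply i)

lemma Gx_meas : Measurable (Gx (n := n)) := by
  unfold Gx; fun_prop

lemma cov_ae (p : (Fin n → ℝ) → Prop) :
    (∀ᵐ x ∂(volume.restrict (posOrth n)), p x) ↔ ∀ᵐ t, p (Gx t) := by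
  rw [ae_restrict_iff' posOrth_meas]
  constructor
  · intro h
    rw [ae_iff] at h ⊢
    have h1 := addHaar_image_eq_zero_of_differentiableOn_of_addHaar_eq_zero volume
      (f := fun x : Fin n → ℝ => fun i => Real.log (x i))
      (s := {a | ¬(a ∈ posOrth n → p a)}) (by
        rw [differentiableOn_pi]
        intro i x hx
        have hx' : x ∈ posOrth n := by
          by_contra hc
          exact hx fun h => absurd h hc
        have h2 : DifferentiableAt ℝ (fun x : Fin n → ℝ => x i) x := by fun_prop
        exact (h2.log (hx' i).ne').differentiableWithinAt) h
    refine measure_mono_null ?_ h1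
    intro t ht
    refine ⟨Gx t, ?_, ?_⟩
    · intro hh; exact ht (hh (Gx_pos t))
    · ext i; simp [Gx]
  · intro h
    rw [ae_iff] at h ⊢
    have h1 := addHaar_image_eq_zero_of_differentiableOn_of_addHaar_eq_zero volume
      (f := Gx (n := n)) (s := {t | ¬ p (Gx t)})
      (fun t _ => (Gx_deriv t).differentiableAt.differentiableWithinAt) h
    refine measure_mono_null ?_ h1
    intro x hx
    simp only [mem_ofPred_eq, Classical.not_imp] at hx
    obtain ⟨t, -, rfl⟩ := Gx_image.symm ▸ hx.1
    exact ⟨t, hx.2, rfl⟩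

lemma Gx_qmp : Measure.QuasiMeasurePreserving (Gx (n := n)) volume
    (volume.restrict (posOrth n)) := by
  refine ⟨Gx_meas, ?_⟩
  refine Measure.AbsolutelyContinuous.mk fun s hs h0 => ?_
  rw [Measure.map_apply Gx_meas hs]
  have := (cov_ae (n := n) (fun x => x ∉ s)).1 (by rw [ae_iff]; simpa using h0)
  rw [ae_iff] at this
  simp only [not_not] at this
  exact this

lemma prod_rpow (t a : Fin n → ℝ) : ∏ i, Gx t i ^ a i = Real.exp (∑ i, a i * t i) := by
  rw [Real.exp_sum]
  refine Finset.prod_congr rfl fun i _ => ?_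
  rw [Gx, ← Real.exp_mul, mul_comm]

def kap (c : Fin n → ℝ) (k : (Fin n → ℝ) → ℝ) (t : Fin n → ℝ) : ℝ :=
  k (Gx t) * Real.exp (∑ i, c i * t i)

def phi (c : Fin n → ℝ) (f : (Fin n → ℝ) → ℝ) (t : Fin n → ℝ) : ℝ :=
  f (Gx t) * Real.exp (∑ i, (1 - c i) * t i)

lemma kap_int {c : Fin n → ℝ} {k : (Fin n → ℝ) → ℝ} (hk : MemL1w n c k) :
    Integrable (kap c k) := by
  unfold MemL1w at hk
  rw [cov_integrable] at hk
  refine hk.congr (Eventually.of_forall fun t => ?_)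
  simp only [smul_eq_mul, kap, prod_rpow]
  rw [mul_left_comm, ← Real.exp_add, ← Finset.sum_add_distrib]
  congr 3; ext i; ring

lemma eq_trans (c : Fin n → ℝ) (k f : (Fin n → ℝ) → ℝ) (s : Fin n → ℝ) :
    ∫ x in posOrth n, k (fun i => Gx s i * x i) * f x =
      Real.exp (-∑ i, c i * s i) * ∫ t, kap c k (s + t) * phi c f t := by
  rw [cov_int, ← integral_const_mul]
  congr 1
  ext t
  have h1 : (fun i => Gx s i * Gx t i) = Gx (s + t) := by
    ext i; simp [Gx, Real.exp_add]
  simp only [h1, kap, phi, smul_eq_mul]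
  have h2 : Real.exp (∑ i, t i) = Real.exp (-∑ i, c i * s i) *
      Real.exp (∑ i, c i * (s + t) i) * Real.exp (∑ i, (1 - c i) * t i) := by
    rw [← Real.exp_add, ← Real.exp_add, ← Finset.sum_neg_distrib, ← Finset.sum_add_distrib,
      ← Finset.sum_add_distrib]
    congr 2; ext i; simp; ring
  rw [h2]; ring

lemma mellin_trans (c : Fin n → ℝ) (k : (Fin n → ℝ) → ℝ) (ξ : Fin n → ℝ) :
    mellinT n k (fun i => (c i : ℂ) + I * (ξ i : ℂ)) =
      ∫ t, Complex.exp (((∑ i, ξ i * t i : ℝ) : ℂ) * I) * (kap c k t : ℂ) := by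
  unfold mellinT
  rw [cov_int]
  congr 1
  ext t
  have h1 : ∏ i, (Gx t i : ℂ) ^ ((c i : ℂ) + I * (ξ i : ℂ) - 1) =
      Complex.exp (∑ i, (t i : ℂ) * ((c i : ℂ) + I * (ξ i : ℂ) - 1)) := by
    rw [Complex.exp_sum]
    refine Finset.prod_congr rfl fun i _ => ?_
    rw [Complex.cpow_def_of_ne_zero (by exact_mod_cast (Gx_pos t i).ne'),
      ← Complex.ofReal_log (Gx_pos t i).le, Gx, Real.log_exp]
  rw [h1, Complex.real_smul, kap, Complex.ofReal_mul, Complex.ofReal_exp, Complex.ofReal_exp,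
    mul_comm (k (Gx t) : ℂ), ← mul_assoc, ← mul_assoc, ← Complex.exp_add, ← Complex.exp_add]
  congr 2
  push_cast
  rw [Finset.sum_mul, ← Finset.sum_add_distrib, ← Finset.sum_add_distrib]
  congr 1; ext i; ring

lemma wiener_pi {κ φ : (Fin n → ℝ) → ℝ} {K : ℝ} (hκ : Integrable κ)
    (hm : AEStronglyMeasurable φ volume) (hb : ∀ᵐ t, |φ t| ≤ K)
    (h0 : ∀ s, ∫ t, κ (s + t) * φ t = 0)
    (hne : ∀ ξ : Fin n → ℝ, ∫ t, Complex.exp (((∑ i, ξ i * t i : ℝ) : ℂ) * I) * (κ t : ℂ) ≠ 0) :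
    ∀ᵐ t, φ t = 0 := by
  let φ1 := hm.mk φ
  have hm1 : Measurable φ1 := hm.stronglyMeasurable_mk.measurable
  let φ2 : (Fin n → ℝ) → ℝ := fun t => if |φ1 t| ≤ K then φ1 t else 0
  have hm2 : Measurable φ2 :=
    Measurable.ite (measurableSet_le (by fun_prop) measurable_const) hm1 measurable_const
  have hb2 : ∀ t, |φ2 t| ≤ |K| := by
    intro t
    simp only [φ2]
    split_ifs with h
    · exact h.trans (le_abs_self _)
    · simp
  have he : φ =ᵐ[volume] φ2 := by
    filter_upwards [hm.ae_eq_mk, hb] with t h1 h2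
    have h3 : φ1 t = φ t := h1.symm
    simp only [φ2, h3, if_pos h2]
  let E := EuclideanSpace ℝ (Fin n)
  have hmp : MeasurePreserving (fun x : E => WithLp.ofLp x) volume volume :=
    PiLp.volume_preserving_ofLp (Fin n)
  have hme : MeasurableEmbedding (fun x : E => WithLp.ofLp x) :=
    (MeasurableEquiv.toLp 2 (Fin n → ℝ)).symm.measurableEmbedding
  have hw := wiener (E := E) (κ := fun x => (κ (WithLp.ofLp x) : ℂ))
    (φ := fun x => (φ2 (-WithLp.ofLp x) : ℂ)) (C := |K|) ?_ ?_ ?_ ?_ ?_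
  · have h1 : ∀ᵐ t : Fin n → ℝ, φ2 (-t) = 0 := by
      rw [← hmp.map_eq, hme.ae_map_iff]
      filter_upwards [hw] with x hx
      exact_mod_cast hx
    have h2 : ∀ᵐ t : Fin n → ℝ, φ2 t = 0 := by
      have := (Measure.measurePreserving_neg (volume : Measure (Fin n → ℝ))).quasiMeasurePreserving.ae h1
      simpa using this
    filter_upwards [he, h2] with t h3 h4
    rw [h3, h4]
  · exact (hmp.integrable_comp_of_integrable hκ).ofReal
  · have := hmp.measurable
    exact Complex.measurable_ofReal.comp (hm2.comp this.neg)
  · intro x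
    rw [Complex.norm_real]
    exact hb2 _
  · intro x
    unfold cv
    have h1 := hmp.integral_comp hme (fun y : Fin n → ℝ => ((κ y : ℂ) * (φ2 (-(WithLp.ofLp x - y)) : ℂ)))
    refine h1.trans ?_
    have h2 := h0 (WithLp.ofLp x)
    rw [← integral_add_left_eq_self _ (WithLp.ofLp x)]
    have h3 : ∫ t, κ (WithLp.ofLp x + t) * φ2 t = 0 := by
      rw [← h2]
      apply integral_congr_ae
      filter_upwards [he] with t ht
      rw [ht]
    simp only [sub_add_cancel_left, neg_neg]
    have h4 := congrArg (fun r : ℝ => (r : ℂ)) h3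
    simp only [← integral_complex_ofReal] at h4
    simpa using h4
  · intro ξ
    have := hne (fun i => -2 * Real.pi * ξ i)
    rw [Real.fourier_eq']
    have h1 := hmp.integral_comp hme (fun t : Fin n → ℝ =>
      Complex.exp (((∑ i, (-2 * Real.pi * ξ i) * t i : ℝ) : ℂ) * I) * (κ t : ℂ))
    rw [← h1] at this
    convert! this using 3 with x
    rw [smul_eq_mul]
    congr 4
    rw [PiLp.inner_apply, Finset.mul_sum]
    congr 1; ext i
    simp; ring

end CoV

/-- Lemma: for `k ∈ L¹_c(ℝ^n_+)`, the equation `∫_{ℝ^n_+} k(p₁x₁,…,pₙxₙ) f(x) dx = 0`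
for all `p ∈ ℝ^n_+` has only the trivial solution `f = 0` a.e. in `L^∞_{I-c}(ℝ^n_+)`
iff `(Mk)(c + iξ) ≠ 0` for every `ξ ∈ ℝ^n`. -/
theorem mult_shift_equation_trivial_Linf_iff_mellin_no_zeros
    (n : ℕ) (hn : 1 ≤ n) (c : Fin n → ℝ) (k : (Fin n → ℝ) → ℝ)
    (hk : MemL1w n c k) :
    (∀ f : (Fin n → ℝ) → ℝ, MemLinfw n (fun i => 1 - c i) f →
        (∀ p ∈ posOrth n, ∫ x in posOrth n, k (fun i => p i * x i) * f x = 0) →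
        ∀ᵐ x ∂(volume.restrict (posOrth n)), f x = 0) ↔
      ∀ ξ : Fin n → ℝ, mellinT n k (fun i => (c i : ℂ) + I * (ξ i : ℂ)) ≠ 0 := by
  constructor
  · intro H ξ hz
    rw [mellin_trans] at hz
    set f : (Fin n → ℝ) → ℝ := fun x =>
      (∏ i, x i ^ (c i - 1)) * Real.cos (∑ i, ξ i * Real.log (x i)) with hf
    have hfm : Measurable f := by
      apply Measurable.mul
      · exact Finset.measurable_prod _ fun i _ => by fun_prop
      · exact Real.measurable_cos.comp (Finset.measurable_sum _ fun i _ => by fun_prop)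
    have hfG : ∀ t, f (Gx t) = Real.exp (∑ i, (c i - 1) * t i) * Real.cos (∑ i, ξ i * t i) := by
      intro t
      simp only [hf]
      rw [prod_rpow t (fun i => c i - 1)]
      simp [Gx]
    have hphi : ∀ t, f (Gx t) * Real.exp (∑ i, (1 - c i) * t i) = Real.cos (∑ i, ξ i * t i) := by
      intro t
      rw [hfG, mul_right_comm, ← Real.exp_add, ← Finset.sum_add_distrib]
      simp [← add_mul]
    have h1 := H f ⟨hfm.aestronglyMeasurable, 1, by
      rw [cov_ae]
      refine Filter.Eventually.of_forall fun t => ?_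
      rw [prod_rpow t (fun i => 1 - c i), hphi]
      exact Real.abs_cos_le_one _⟩ (by
      intro p hp
      obtain ⟨s, -, rfl⟩ := Gx_image.symm ▸ hp
      rw [eq_trans c]
      have h2 : ∫ t, kap c k (s + t) * phi c f t =
          ∫ t, kap c k t * Real.cos (∑ i, ξ i * (t i - s i)) := by
        rw [← integral_add_left_eq_self (fun t => kap c k t * Real.cos (∑ i, ξ i * (t i - s i))) s]
        congr 1
        ext t
        rw [phi, hphi]
        simp
      have hint : Integrable fun t : Fin n → ℝ =>
          Complex.exp (((∑ i, ξ i * t i : ℝ) : ℂ) * I) * (kap c k t : ℂ) := by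
        apply (kap_int hk).ofReal.bdd_mul (c := 1)
        · apply Continuous.aestronglyMeasurable; fun_prop
        · exact Filter.Eventually.of_forall fun t => (Complex.norm_exp_ofReal_mul_I _).le
      have h3 : ∫ t, kap c k t * Real.cos (∑ i, ξ i * (t i - s i)) =
          (∫ t, Complex.exp (-((∑ i, ξ i * s i : ℝ) : ℂ) * I) *
            (Complex.exp (((∑ i, ξ i * t i : ℝ) : ℂ) * I) * (kap c k t : ℂ))).re := by
        have := reCLM.integral_comp_comm (hint.const_mul
          (Complex.exp (-((∑ i, ξ i * s i : ℝ) : ℂ) * I)))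
        simp only [reCLM_apply] at this
        rw [← this]
        congr 1
        ext t
        rw [← mul_assoc, ← Complex.exp_add, ← add_mul, ← Complex.ofReal_neg, ← Complex.ofReal_add,
          Complex.re_mul_ofReal, Complex.exp_ofReal_mul_I_re, mul_comm]
        congr 2
        rw [← Finset.sum_neg_distrib, ← Finset.sum_add_distrib]
        congr 1; ext i; ring
      rw [h2, h3, integral_const_mul, hz]
      simp)
    rw [cov_ae] at h1
    have h4 : (fun t : Fin n → ℝ => Real.cos (∑ i, ξ i * t i)) =ᵐ[volume] fun _ => (0 : ℝ) := by
      filter_upwards [h1] with t ht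
      rw [← hphi, ht, zero_mul]
    have h5 := (Continuous.ae_eq_iff_eq (volume : Measure (Fin n → ℝ)) (by fun_prop)
      continuous_const).1 h4
    have h6 := congrFun h5 0
    simp at h6
  · intro hne f hf h0
    obtain ⟨hfm, K, hK⟩ := hf
    rw [cov_ae] at hK ⊢
    have hw := wiener_pi (κ := kap c k) (φ := phi c f) (K := K) (kap_int hk) (by
        apply (hfm.comp_quasiMeasurePreserving Gx_qmp).mul
        apply Continuous.aestronglyMeasurable; fun_prop)
      (by
        filter_upwards [hK] with t ht
        rwa [prod_rpow t (fun i => 1 - c i)] at ht)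
      (by
        intro s
        have h1 := h0 (Gx s) (Gx_pos s)
        rw [eq_trans c] at h1
        exact (mul_eq_zero.1 h1).resolve_left (Real.exp_pos _).ne')
      (fun ξ => by rw [← mellin_trans]; exact hne ξ)
    filter_upwards [hw] with t ht
    exact (mul_eq_zero.1 ht).resolve_right (Real.exp_pos _).ne'
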